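/- (Calibration of probabilistic conformal prediction, PCP) Let X be a measurable space and d ≥ 1. Let κ be a Markov kernel from X to ℝ^d (the trained probabilistic predictor). Let (x_1, y_1), …, (x_N, y_N), (x_{N+1}, y_{N+1}) be i.i.d. random pairs in X × ℝ^d, and, conditionally independently given the pairs, for each i = 1, …, N+1 draw M i.i.d. predictions ŷ_i^1, …, ŷ_i^M ∼ κ(x_i, ·). Define the score s_i = min_{1 ≤ m ≤ M} ‖y_i − ŷ_i^m‖ (Euclidean norm) for the calibration points i ≤ N, and for a candidate y' define s((x_{N+1}, y')) = min_{1 ≤ m ≤ M} ‖y' − ŷ_{N+1}^m‖. For α ∈ (0,1) with α ≥ 1/(N+1), let Q_{1−α} be the ⌈(1−α)(N+1)⌉-th smallest value among s_1, …, s_N, and define Γ_M(x_{N+1}) = { y' ∈ ℝ^d : min_{1 ≤ m ≤ M} ‖y' − ŷ_{N+1}^m‖ ≤ Q_{1−α} }. Then Pr( y_{N+1} ∈ Γ_M(x_{N+1}) ) ≥ 1 − α, where the probability is over the calibration data, the test point, and all random predictions. -/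

import Mathlib

open MeasureTheory ProbabilityTheory

/-- The `k`-th smallest value (counting multiplicities) of a list of reals:
the `k`-th entry of the list sorted in nondecreasing order. -/
noncomputable def kthSmallest (l : List ℝ) (k : ℕ) : ℝ :=
  (l.mergeSort (fun a b => @decide (a ≤ b) (Classical.propDecidable _))).getD (k - 1) 0

/-!
Drawing a prediction from the same kernel at every point of an exchangeable sample, independently
given the sample, keeps it exchangeable. Hence so is the family of the `N + 1` scores, and the rank
of the test score has the same law as that of any other score. In every realization at least `k`
indices have fewer than `k` scores strictly below their own, so by symmetry the test index is one
of them with probability at least `k / (N + 1)`. In that case the test score is at most the `k`-th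
smallest calibration score, and `k = ⌈(1 - α)(N + 1)⌉` makes the bound at least `1 - α`.
-/

open Finset
open scoped ENNReal

section Rank

variable {ι R : Type*} [Fintype ι] [LinearOrder R]

/-- The rank of `a` among the values of the family `f`, encoded as the number of values strictly
below `a`: it starts at `0`, and tied values share the smallest possible rank. -/
def strictRank (f : ι → R) (a : R) : ℕ := #{i | f i < a}

theorem strictRank_comp_equiv {ι' : Type*} [Fintype ι'] (f : ι → R) (e : ι' ≃ ι) (a : R) :
    strictRank (f ∘ e) a = strictRank f a := by
  simp only [strictRank, card_filter, Function.comp_apply]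
  exact e.sum_comp fun i => if f i < a then 1 else 0

theorem strictRank_comp_embedding_le {ι' : Type*} [Fintype ι'] (f : ι → R) (e : ι' ↪ ι) (a : R) :
    strictRank (f ∘ e) a ≤ strictRank f a := by
  refine card_le_card_of_injOn e (fun i hi => ?_) e.injective.injOn
  simpa using hi

theorem le_card_strictRank_lt (f : ι → R) {k : ℕ} (hk : k ≤ Fintype.card ι) :
    k ≤ #{j | strictRank f (f j) < k} := by
  by_cases h : ∀ j, strictRank f (f j) < k
  · simpa [filter_true_of_mem fun j _ => h j] using hk
  -- Below a smallest value of rank at least `k`, all ranks are less than `k`.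
  obtain ⟨j, hj, hmin⟩ := exists_min_image {j | k ≤ strictRank f (f j)} f (by
    simpa [filter_nonempty_iff] using h)
  calc k ≤ strictRank f (f j) := (mem_filter.1 hj).2
    _ ≤ #{i | strictRank f (f i) < k} := card_le_card fun i hi => by
      simp only [mem_filter, mem_univ, true_and] at hi hmin ⊢
      exact not_le.1 fun hik => (hmin i hik).not_gt hi

variable {Ω : Type*} [MeasurableSpace Ω] [MeasurableSpace R] [TopologicalSpace R]
  [OrderClosedTopology R] [SecondCountableTopology R] [OpensMeasurableSpace R]

theorem measurable_strictRank {f : ι → Ω → R} (hf : ∀ i, Measurable (f i))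
    {g : Ω → R} (hg : Measurable g) : Measurable fun ω => strictRank (f · ω) (g ω) := by
  simp only [strictRank, card_filter]
  exact measurable_sum _ fun i _ =>
    .ite (measurableSet_lt (hf i) hg) measurable_const measurable_const

theorem measurableSet_strictRank_lt {s : Ω → R} (hs : Measurable s) (k : ℕ) (j : ι) :
    MeasurableSet {w : ι → Ω | strictRank (s ∘ w) (s (w j)) < k} :=
  measurableSet_lt (measurable_strictRank (fun i => hs.comp (measurable_pi_apply i))
    (hs.comp (measurable_pi_apply j))) measurable_const

end Rank

section KthSmallest

theorem lt_countP_lt_of_getElem_lt {R : Type*} [LinearOrder R] {l : List R}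
    (hl : l.Pairwise (· ≤ ·)) {i : ℕ} (hi : i < l.length) {a : R} (ha : l[i] < a) :
    i < l.countP (· < a) := by
  have hprefix : (l.take (i + 1)).countP (· < a) = (l.take (i + 1)).length := by
    refine List.countP_eq_length.2 fun b hb => ?_
    obtain ⟨j, hj, rfl⟩ := List.getElem_of_mem hb
    have hji : j ≤ i := by grind
    simpa using (hl.rel_get_of_le (a := ⟨j, by omega⟩) (b := ⟨i, hi⟩) hji).trans_lt ha
  have hle := (List.take_sublist (i + 1) l).countP_le (p := (· < a))
  rw [hprefix, List.length_take] at hle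
  omega

theorem countP_lt_ofFn {R : Type*} [LinearOrder R] {n : ℕ} (f : Fin n → R) (a : R) :
    (List.ofFn f).countP (· < a) = strictRank f a := by
  rw [List.ofFn_eq_map, List.countP_map, List.countP_eq_length_filter]
  rfl

theorem exists_perm_pairwise_le_kthSmallest_eq (l : List ℝ) :
    ∃ l' : List ℝ, l'.Perm l ∧ l'.Pairwise (· ≤ ·) ∧ ∀ k, kthSmallest l k = l'.getD (k - 1) 0 :=
  ⟨_, List.mergeSort_perm _ _, by convert! List.pairwise_mergeSort' (· ≤ ·) l, fun _ => rfl⟩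

theorem le_kthSmallest_of_countP_lt {l : List ℝ} {k : ℕ} (hk : k ≤ l.length) {a : ℝ}
    (h : l.countP (· < a) < k) : a ≤ kthSmallest l k := by
  obtain ⟨l', hperm, hsorted, heq⟩ := exists_perm_pairwise_le_kthSmallest_eq l
  have hlt : k - 1 < l'.length := by
    rw [hperm.length_eq]
    omega
  rw [heq, List.getD_eq_getElem _ _ hlt]
  by_contra! hkth
  have hcount := lt_countP_lt_of_getElem_lt hsorted hlt hkth
  rw [hperm.countP_eq] at hcount
  omega

theorem le_kthSmallest_ofFn {n k : ℕ} (hk : k ≤ n) {f : Fin n → ℝ} {a : ℝ}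
    (h : strictRank f a < k) : a ≤ kthSmallest (List.ofFn f) k :=
  le_kthSmallest_of_countP_lt (by simpa using hk) (by rwa [countP_lt_ofFn])

end KthSmallest

theorem natCast_mul_measure_univ_le_sum {ι Ω : Type*} [Fintype ι] [MeasurableSpace Ω]
    (μ : Measure Ω) {A : ι → Set Ω} [∀ ω, DecidablePred (ω ∈ A ·)]
    (hA : ∀ i, MeasurableSet (A i)) {k : ℕ} (hk : ∀ ω, k ≤ #{i | ω ∈ A i}) :
    k * μ Set.univ ≤ ∑ i, μ (A i) := by
  calc (k : ℝ≥0∞) * μ Set.univ = ∫⁻ _, k ∂μ := by rw [lintegral_const]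
    _ ≤ ∫⁻ ω, ∑ i, (A i).indicator 1 ω ∂μ := lintegral_mono fun ω => by
      simpa [Set.indicator_apply] using hk ω
    _ = ∑ i, μ (A i) := by
      rw [lintegral_finsetSum _ fun i _ => measurable_one.indicator (hA i)]
      simp [hA]

section Exchangeable

variable {ι Ω Z : Type*} [MeasurableSpace Ω] [MeasurableSpace Z]

/-- A law on families `ι → Ω` is exchangeable if it is invariant under every permutation of the
index set; for infinite `ι` this includes the permutations that move infinitely many indices. -/
def IsExchangeable (μ : Measure (ι → Ω)) : Prop :=
  ∀ σ : Equiv.Perm ι, MeasurePreserving (fun w : ι → Ω => w ∘ σ) μ μ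

theorem pi_map_comp_perm [Fintype ι] (μ : ι → Measure Ω) [∀ i, SigmaFinite (μ i)]
    (σ : Equiv.Perm ι) :
    (Measure.pi μ).map (fun w => w ∘ σ) = Measure.pi fun i => μ (σ i) :=
  (measurePreserving_arrowCongr' μ (fun i => μ (σ i)) σ.symm (.refl Ω) fun i => by
    rw [σ.apply_symm_apply]
    exact .id (μ i)).map_eq

theorem isExchangeable_pi [Fintype ι] (ν : Measure Ω) [SigmaFinite ν] :
    IsExchangeable (Measure.pi fun _ : ι => ν) :=
  fun σ => ⟨by fun_prop, pi_map_comp_perm _ σ⟩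

theorem IsExchangeable.bind {P : Measure (ι → Z)} (hP : IsExchangeable P)
    (K : Kernel (ι → Z) (ι → Ω))
    (hK : ∀ (σ : Equiv.Perm ι) (z : ι → Z), (K z).map (fun w => w ∘ σ) = K (z ∘ σ)) :
    IsExchangeable (P.bind K) := by
  intro σ
  have hσ : Measurable fun w : ι → Ω => w ∘ σ := by fun_prop
  refine ⟨hσ, ?_⟩
  calc (P.bind K).map (fun w => w ∘ σ)
      = (P.map K |>.map (Measure.map fun w => w ∘ σ)).join := (Measure.join_map_map hσ _).symm
    _ = (P.map fun z => K (z ∘ σ)).join := by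
      rw [Measure.map_map (Measure.measurable_map _ hσ) K.measurable]
      exact congrArg (fun L => (P.map L).join) (funext (hK σ))
    _ = ((P.map fun z => z ∘ σ).map K).join := by
      rw [Measure.map_map K.measurable (hP σ).measurable]
      rfl
    _ = P.bind K := by rw [(hP σ).map_eq, Measure.bind]

variable [Fintype ι] {R : Type*} [LinearOrder R] [MeasurableSpace R] [TopologicalSpace R]
  [OrderClosedTopology R] [SecondCountableTopology R] [OpensMeasurableSpace R]

theorem IsExchangeable.measure_strictRank_lt_eq {μ : Measure (ι → Ω)} (hμ : IsExchangeable μ)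
    {s : Ω → R} (hs : Measurable s) (k : ℕ) (i j : ι) :
    μ {w | strictRank (s ∘ w) (s (w i)) < k} = μ {w | strictRank (s ∘ w) (s (w j)) < k} := by
  classical
  rw [← (hμ (Equiv.swap i j)).measure_preimage
    (measurableSet_strictRank_lt hs k j).nullMeasurableSet]
  congr 1
  ext w
  have hwj : (w ∘ Equiv.swap i j) j = w i := by simp
  rw [Set.mem_preimage, Set.mem_ofPred_eq, Set.mem_ofPred_eq, hwj, ← Function.comp_assoc,
    strictRank_comp_equiv]

theorem IsExchangeable.natCast_mul_measure_univ_le {μ : Measure (ι → Ω)}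
    (hμ : IsExchangeable μ) {s : Ω → R} (hs : Measurable s) {k : ℕ} (hk : k ≤ Fintype.card ι)
    (j : ι) :
    k * μ Set.univ ≤ Fintype.card ι * μ {w | strictRank (s ∘ w) (s (w j)) < k} := by
  have hsum := natCast_mul_measure_univ_le_sum μ
    (A := fun i => {w : ι → Ω | strictRank (s ∘ w) (s (w i)) < k})
    (measurableSet_strictRank_lt hs k) (fun w => le_card_strictRank_lt (s ∘ w) hk)
  simpa [hμ.measure_strictRank_lt_eq hs k _ j] using hsum

end Exchangeable

theorem IsExchangeable.ofReal_one_sub_le_measure_le_kthSmallest {Ω : Type*} [MeasurableSpace Ω]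
    {N : ℕ} {μ : Measure (Fin (N + 1) → Ω)} [IsProbabilityMeasure μ] (hμ : IsExchangeable μ)
    {s : Ω → ℝ} (hs : Measurable s) {α : ℝ} (hα : 1 / ((N : ℝ) + 1) ≤ α) :
    ENNReal.ofReal (1 - α) ≤
      μ {w | s (w (Fin.last N)) ≤
        kthSmallest (List.ofFn fun i : Fin N => s (w i.castSucc)) ⌈(1 - α) * ((N : ℝ) + 1)⌉₊} := by
  set k := ⌈(1 - α) * ((N : ℝ) + 1)⌉₊
  have hkN : k ≤ N := Nat.ceil_le.2 (by rw [div_le_iff₀ (by positivity)] at hα; linarith)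
  have hrank : (k : ℝ≥0∞) ≤ (N + 1 : ℕ) *
      μ {w | strictRank (s ∘ w) (s (w (Fin.last N))) < k} := by
    simpa using
      hμ.natCast_mul_measure_univ_le hs (k := k) (by rw [Fintype.card_fin]; omega) (Fin.last N)
  calc ENNReal.ofReal (1 - α) ≤ ENNReal.ofReal (k / (N + 1 : ℕ)) :=
        ENNReal.ofReal_le_ofReal <| (le_div_iff₀ (by positivity)).2 (by
          push_cast
          exact Nat.le_ceil _)
    _ = k / (N + 1 : ℕ) := by
        rw [ENNReal.ofReal_div_of_pos (by positivity), ENNReal.ofReal_natCast,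
          ENNReal.ofReal_natCast]
    _ ≤ μ {w | strictRank (s ∘ w) (s (w (Fin.last N))) < k} := ENNReal.div_le_of_le_mul' hrank
    _ ≤ _ := measure_mono fun w hw => le_kthSmallest_ofFn hkN <|
        (strictRank_comp_embedding_le (s ∘ w) Fin.castSuccEmb _).trans_lt hw

section ProductKernel

variable {ι Z : Type*} [Fintype ι] [MeasurableSpace Z] {E : ι → Type*} [∀ i, MeasurableSpace (E i)]

/-- The product of a finite family of Markov kernels with a common source: given `z`, the
coordinates are independent and the `i`-th one has law `κ i z`. -/
noncomputable def productKernel (κ : ∀ i, Kernel Z (E i)) [∀ i, IsMarkovKernel (κ i)] :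
    Kernel Z (∀ i, E i) where
  toFun z := Measure.pi fun i => κ i z
  measurable' := by
    refine .measure_of_isPiSystem_of_isProbabilityMeasure generateFrom_pi.symm isPiSystem_pi ?_
    rintro _ ⟨s, hs, rfl⟩
    simp only [Measure.pi_pi]
    exact measurable_prod _ fun i _ => (κ i).measurable_coe (hs i (Set.mem_univ i))

instance (κ : ∀ i, Kernel Z (E i)) [∀ i, IsMarkovKernel (κ i)] :
    IsMarkovKernel (productKernel κ) :=
  ⟨fun z => inferInstanceAs (IsProbabilityMeasure (Measure.pi fun i => κ i z))⟩

end ProductKernel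

section AttachDraws

variable {ι Z F : Type*} [Fintype ι] [MeasurableSpace Z] [MeasurableSpace F]

variable (ι) in
/-- The kernel that attaches to each point `z i` of a sample a draw from `η (z i)`, independently
over `i` given the sample. -/
noncomputable def attachDraws (η : Kernel Z F) [IsMarkovKernel η] :
    Kernel (ι → Z) (ι → Z × F) :=
  productKernel fun i => (Kernel.id ×ₖ η).comap (fun z : ι → Z => z i) (measurable_pi_apply i)

instance (η : Kernel Z F) [IsMarkovKernel η] : IsMarkovKernel (attachDraws ι η) :=
  inferInstanceAs (IsMarkovKernel (productKernel _))

theorem attachDraws_apply (η : Kernel Z F) [IsMarkovKernel η] (z : ι → Z) :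
    attachDraws ι η z = Measure.pi fun i => (Kernel.id ×ₖ η) (z i) := rfl

theorem attachDraws_apply_eq_map (η : Kernel Z F) [IsMarkovKernel η] (z : ι → Z) :
    attachDraws ι η z =
      (Measure.pi fun i => η (z i)).map fun (y : ι → F) (i : ι) => (z i, y i) := by
  have (i : ι) : IsProbabilityMeasure ((η (z i)).map (Prod.mk (z i))) :=
    Measure.isProbabilityMeasure_map (by fun_prop)
  simp_rw [attachDraws_apply, Kernel.prod_apply, Kernel.id_apply, Measure.dirac_prod]
  exact (Measure.pi_map_pi fun i => by fun_prop).symm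

theorem IsExchangeable.bind_attachDraws {P : Measure (ι → Z)} (hP : IsExchangeable P)
    (η : Kernel Z F) [IsMarkovKernel η] : IsExchangeable (P.bind (attachDraws ι η)) :=
  hP.bind _ fun σ z => pi_map_comp_perm (fun i => (Kernel.id ×ₖ η) (z i)) σ

end AttachDraws

theorem pcp_calibration_general {Z F : Type*} [MeasurableSpace Z] [MeasurableSpace F]
    (η : Kernel Z F) [IsMarkovKernel η] {s : Z × F → ℝ} (hs : Measurable s)
    {N : ℕ} {P : Measure (Fin (N + 1) → Z)} [IsProbabilityMeasure P] (hP : IsExchangeable P)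
    {α : ℝ} (hα : 1 / ((N : ℝ) + 1) ≤ α) :
    ENNReal.ofReal (1 - α) ≤
      (P.bind fun z => Measure.map (fun (y : Fin (N + 1) → F) (i : Fin (N + 1)) => (z i, y i))
        (Measure.pi fun i => η (z i)))
      {w | s (w (Fin.last N)) ≤
        kthSmallest (List.ofFn fun i : Fin N => s (w i.castSucc)) ⌈(1 - α) * ((N : ℝ) + 1)⌉₊} := by
  simp_rw [← attachDraws_apply_eq_map]
  exact (hP.bind_attachDraws η).ofReal_one_sub_le_measure_le_kthSmallest hs hα

/-- Calibration of probabilistic conformal prediction (PCP): the pairs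
`(x i, y i) ∈ X × ℝ^d`, `i = 1, …, N+1`, are i.i.d. with law `ν`; conditionally
independently given the pairs, each point receives `M` i.i.d. predictions drawn from
the Markov kernel `κ` evaluated at its input. With score
`s i = min_m ‖y i - ŷ i m‖` and `Q` the `⌈(1-α)(N+1)⌉`-th smallest calibration score,
the PCP set `Γ_M(x) = {y' | min_m ‖y' - ŷ m‖ ≤ Q}` covers the test label with
probability at least `1 - α`. -/
theorem pcp_calibration
    {X : Type*} [MeasurableSpace X] (d : ℕ) (hd : 1 ≤ d)
    (κ : Kernel X (EuclideanSpace ℝ (Fin d))) [IsMarkovKernel κ]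
    (N M : ℕ) (hM : 1 ≤ M)
    (ν : Measure (X × EuclideanSpace ℝ (Fin d))) [IsProbabilityMeasure ν]
    (α : ℝ) (hα0 : 0 < α) (hα1 : α < 1) (hαN : 1 / ((N : ℝ) + 1) ≤ α) :
    ENNReal.ofReal (1 - α) ≤
      ((Measure.pi fun _ : Fin (N + 1) => ν).bind fun zs =>
        Measure.map
          (fun (yh : Fin (N + 1) → Fin M → EuclideanSpace ℝ (Fin d))
            (i : Fin (N + 1)) => (zs i, yh i))
          (Measure.pi fun i => Measure.pi fun _ : Fin M => κ (zs i).1))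
      {w : Fin (N + 1) → (X × EuclideanSpace ℝ (Fin d)) × (Fin M → EuclideanSpace ℝ (Fin d)) |
        (w (Fin.last N)).1.2 ∈
          {y' : EuclideanSpace ℝ (Fin d) |
            (⨅ m : Fin M, ‖y' - (w (Fin.last N)).2 m‖) ≤
              kthSmallest
                (List.ofFn fun i : Fin N =>
                  ⨅ m : Fin M, ‖(w i.castSucc).1.2 - (w i.castSucc).2 m‖)
                ⌈(1 - α) * ((N : ℝ) + 1)⌉₊}} :=
  pcp_calibration_general (productKernel fun _ : Fin M => κ.comap Prod.fst measurable_fst)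
    (s := fun w => ⨅ m, ‖w.1.2 - w.2 m‖) (.iInf fun m => by fun_prop) (isExchangeable_pi ν) hαN
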